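/- Let γ ∈ ℝ, let q ≥ 3 be fixed, and let K be a location-scale invariant kernel, not everywhere constant, such that E[|K((Z_{q−j:q−1})_{j=1}^{q})|^p] < ∞ for all p > 0 (Z's iid standard GP(γ), Z_{0:q−1} := 0). Suppose m = m_n satisfies m = o(n^{1−ε}) and ln(n) = o(m^{1−δ}) as n → ∞ for some ε, δ > 0, and define ℓ_n = ⌊(m/n + (ln(n)/(2m))^{1/2}) m⌋. With ζ_{m,ℓ} = cov(K_m(Z_S), K_m(Z_{S'})) for iid standard GP(γ) random variables indexed by sets S, S' with |S| = |S'| = m and |S ∩ S'| = ℓ, one has max_{1 ≤ ℓ ≤ ℓ_n} |ℓ^{−1} ζ_{m,ℓ} − ζ_{m,1}| = o(1/m) as n → ∞. -/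

import Mathlib

open MeasureTheory ProbabilityTheory Filter Real Set Topology
open scoped ENNReal NNReal Classical

noncomputable section

/-- The `j`-th largest entry of the tuple `x` (`j = 0` gives the maximum, `j = 1` the
second largest, ...); `0` when `j` is out of range. -/
def descStat {m : ℕ} (x : Fin m → ℝ) (j : ℕ) : ℝ :=
  if h : j < m then (x ∘ Tuple.sort x) ⟨m - 1 - j, by omega⟩ else 0

/-- The kernel of degree `m` obtained from `K` by applying it to the top-`q`
(descending) order statistics: `K_m(x_1,…,x_m) = K(x_{m:m},…,x_{m−q+1:m})`. -/
def Km {q : ℕ} (K : (Fin q → ℝ) → ℝ) (m : ℕ) (x : Fin m → ℝ) : ℝ :=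
  K fun j => descStat x (j : ℕ)

/-- `K(a x_1 + b, …, a x_q + b) = K(x_1, …, x_q)` for all `a > 0`, `b ∈ ℝ`. -/
def LocScaleInvariant {q : ℕ} (K : (Fin q → ℝ) → ℝ) : Prop :=
  ∀ a b : ℝ, 0 < a → ∀ x : Fin q → ℝ, K (fun j => a * x j + b) = K x

/-- `h_γ(y) = (y^γ - 1)/γ`, interpreted as `log y` when `γ = 0`. -/
def hGamma (γ : ℝ) (y : ℝ) : ℝ := if γ = 0 then Real.log y else (y ^ γ - 1) / γ

lemma measurable_hGamma (γ : ℝ) : Measurable (hGamma γ) := by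
  unfold hGamma
  split_ifs
  · exact Real.measurable_log
  · fun_prop

/-- The uniform distribution on `(0,1)`. -/
def unif01 : Measure ℝ := volume.restrict (Set.Ioo (0:ℝ) 1)

instance : IsProbabilityMeasure unif01 := ⟨by simp [unif01]⟩

/-- The standard Pareto(1) distribution, with cdf `1 - 1/y` for `y ≥ 1`. -/
def pareto1 : Measure ℝ := ProbabilityTheory.paretoMeasure 1 1

instance : IsProbabilityMeasure pareto1 :=
  ProbabilityTheory.isProbabilityMeasure_paretoMeasure one_pos one_pos

/-- The standard generalized Pareto distribution `GP(γ)`: the law of `h_γ(Y)` for `Y`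
standard Pareto(1). -/
def gpMeasure (γ : ℝ) : Measure ℝ := pareto1.map (hGamma γ)

instance (γ : ℝ) : IsProbabilityMeasure (gpMeasure γ) :=
  Measure.isProbabilityMeasure_map (measurable_hGamma γ).aemeasurable

/-- The unit exponential distribution: the law of `-log U` for `U` uniform on `(0,1)`. -/
def expMeasure1 : Measure ℝ := unif01.map fun u => -Real.log u

instance : IsProbabilityMeasure expMeasure1 :=
  Measure.isProbabilityMeasure_map Real.measurable_log.neg.aemeasurable

/-- The Erlang(q) distribution: the law of the sum of `q` independent unit exponentials. -/
def erlangMeasure (q : ℕ) : Measure ℝ :=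
  (Measure.pi fun _ : Fin q => expMeasure1).map fun e => ∑ i, e i

instance (q : ℕ) : IsProbabilityMeasure (erlangMeasure q) :=
  Measure.isProbabilityMeasure_map
    (Finset.measurable_sum _ fun i _ => measurable_pi_apply i).aemeasurable

/-- The joint law of `r` iid `GP(γ)` random variables. -/
def gpPi (γ : ℝ) (r : ℕ) : Measure (Fin r → ℝ) := Measure.pi fun _ => gpMeasure γ

instance (γ : ℝ) (r : ℕ) : IsProbabilityMeasure (gpPi γ r) := by
  unfold gpPi; infer_instance

/-- The vector `(Z_{q-j:q-1})_{j=1}^{q}`: the descending order statistics of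
`z_1,…,z_{q-1}` with an extra last entry `Z_{0:q-1} := 0`. -/
def refVec {q : ℕ} (z : Fin (q-1) → ℝ) : Fin q → ℝ := fun j => descStat z (j : ℕ)

/-- `θ = E[K((Z_{q-j:q-1})_{j=1}^{q})]` for iid `GP(γ)` variables `Z_1,…,Z_{q-1}`. -/
def thetaK (γ : ℝ) {q : ℕ} (K : (Fin q → ℝ) → ℝ) : ℝ :=
  ∫ z, K (refVec z) ∂(gpPi γ (q-1))

/-- all moments of `K((Z_{q-j:q-1})_{j=1}^{q})` are finite. -/
def MomentCond (γ : ℝ) {q : ℕ} (K : (Fin q → ℝ) → ℝ) : Prop :=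
  ∀ p : ℝ, 0 < p →
    ∫⁻ z, ENNReal.ofReal (|K (refVec z)| ^ p) ∂(gpPi γ (q-1)) < ⊤

/-- The asymptotic variance
`σ²_K(γ) = ∫_0^∞ (E[K̄_{q+1}((Z_{q-j:q-1})_{j=1}^q, h_γ(S_q/x))])² dx`. -/
def sigmaSqK (γ : ℝ) {q : ℕ} (K : (Fin q → ℝ) → ℝ) : ℝ :=
  ∫ x in Set.Ioi (0:ℝ),
    (∫ zs : (Fin (q-1) → ℝ) × ℝ,
        (Km K (q+1) (Fin.snoc (refVec zs.1) (hGamma γ (zs.2 / x))) - thetaK γ K)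
      ∂((gpPi γ (q-1)).prod (erlangMeasure q))) ^ 2

/-- The U-statistic with kernel `K_m` evaluated on the sample `z`. -/
def UStat {q : ℕ} (K : (Fin q → ℝ) → ℝ) (m n : ℕ) (z : Fin n → ℝ) : ℝ :=
  ((n.choose m : ℝ))⁻¹ *
    ∑ I ∈ Finset.powersetCard m (Finset.univ : Finset (Fin n)),
      Km K I.card fun j => z (I.orderIsoOfFin rfl j).1

/-- Condition on the degree sequence: `m = o(n^{1-ε})` and `log n = o(m^{1-δ})`. -/
def DegreeCond (m : ℕ → ℕ) : Prop :=
  ∃ ε > (0:ℝ), ∃ δ > (0:ℝ),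
    Tendsto (fun n => (m n : ℝ) / (n : ℝ) ^ (1 - ε)) atTop (𝓝 0) ∧
    Tendsto (fun n : ℕ => Real.log n / (m n : ℝ) ^ (1 - δ)) atTop (𝓝 0)

/-- `ζ_{m,ℓ} = cov(K_m(Z_S), K_m(Z_{S'}))` for the blocks `S = [1:m]`,
`S' = [(m-ℓ+1):(2m-ℓ)]` (zero-indexed here), which overlap in `ℓ` indices. -/
def zetaCov {Ω : Type*} [MeasurableSpace Ω] (P : Measure Ω) {q : ℕ}
    (K : (Fin q → ℝ) → ℝ) (Z : ℕ → Ω → ℝ) (m ℓ : ℕ) : ℝ :=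
  (∫ ω, Km K m (fun i : Fin m => Z i ω) * Km K m (fun i : Fin m => Z (m - ℓ + i) ω) ∂P)
    - (∫ ω, Km K m (fun i : Fin m => Z i ω) ∂P)
      * (∫ ω, Km K m (fun i : Fin m => Z (m - ℓ + i) ω) ∂P)

/-- Convergence in distribution to a Gaussian, expressed via pointwise convergence of
the cumulative distribution functions (the Gaussian cdf being continuous). -/
def TendstoGaussian {Ω : Type*} [MeasurableSpace Ω] (P : Measure Ω)
    (T : ℕ → Ω → ℝ) (μ : ℝ) (v : ℝ≥0) : Prop :=
  ∀ x : ℝ, Tendsto (fun n => (P {ω | T n ω ≤ x}).toReal) atTop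
    (𝓝 ((gaussianReal μ v (Set.Iic x)).toReal))

/-- Convergence in probability to the constant `c`. -/
def TendstoInProb {Ω : Type*} [MeasurableSpace Ω] (P : Measure Ω)
    (T : ℕ → Ω → ℝ) (c : ℝ) : Prop :=
  ∀ ε : ℝ, 0 < ε → Tendsto (fun n => (P {ω | ε ≤ |T n ω - c|}).toReal) atTop (𝓝 0)


/-- The truncation level `ℓ_n = ⌊(m/n + (ln n/(2m))^{1/2}) m⌋`. -/
def ellSeq (m : ℕ → ℕ) (n : ℕ) : ℕ :=
  ⌊((m n : ℝ) / (n : ℝ) + Real.sqrt (Real.log n / (2 * (m n : ℝ)))) * (m n : ℝ)⌋₊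

/-!
For `Y` Pareto distributed, `Y` conditioned on `Y ≥ a` is distributed as `a * Y`, and
`h_γ(a y) = a ^ γ h_γ(y) + h_γ(a)`. Hence, given its minimum, a `GP(γ)` sample of size `m + 1` is an
affine image of a `GP(γ)` sample of size `m` together with the point `0`, and location-scale
invariance shows that the law of `K_m(Z_1, …, Z_m)`, and with it `ζ_{m,m}`, does not depend on
`m ≥ q - 1`.

For fixed `m`, the function `ℓ ↦ ζ_{m,ℓ}` is of positive type: `(S, T) ↦ ζ_{m,|S ∩ T|}` is a
covariance kernel on the sets of `m` indices. Therefore its forward differences at `0` up to order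
`m` are nonnegative (they are the variances in the Hoeffding decomposition). In the Newton expansion
`ζ_{m,ℓ} = ℓ ζ_{m,1} + ∑_{k ≥ 2} C(ℓ, k) Δᵏζ_{m,0}`, the bound `C(ℓ, k) m² ≤ ℓ² C(m, k)` for `k ≥ 2`
then gives `m |ℓ⁻¹ ζ_{m,ℓ} - ζ_{m,1}| ≤ (ℓ / m) ζ_{m,m}`, which tends to `0` uniformly in `ℓ ≤ ℓ_n`
because `ℓ_n = o(m)`.
-/

section OrderStatistics

variable {m q : ℕ}

lemma descStat_le_iff {x : Fin m → ℝ} {j : ℕ} (hj : j < m) (t : ℝ) :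
    descStat x j ≤ t ↔ m - 1 - j < Finset.card {i | x i ≤ t} := by
  rw [descStat, dif_pos hj, ← Tuple.lt_card_le_iff_apply_le_of_monotone (Tuple.monotone_sort x)]
  simp only [Function.comp_apply, Finset.card_filter]
  rw [Equiv.sum_comp (Tuple.sort x) fun i => if x i ≤ t then 1 else 0]

lemma descStat_of_le {x : Fin m → ℝ} {j : ℕ} (hj : m ≤ j) : descStat x j = 0 :=
  dif_neg hj.not_gt

lemma descStat_comp_perm (x : Fin m → ℝ) (σ : Equiv.Perm (Fin m)) (j : ℕ) :
    descStat (x ∘ σ) j = descStat x j := by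
  simp only [descStat, Tuple.comp_perm_comp_sort_eq_comp_sort]

lemma measurable_descStat (m j : ℕ) : Measurable fun x : Fin m → ℝ => descStat x j := by
  rcases lt_or_ge j m with hj | hj
  · refine measurable_of_Iic fun t => ?_
    simp only [preimage, mem_Iic, descStat_le_iff hj, Finset.card_filter]
    refine measurableSet_lt measurable_const (Finset.measurable_sum _ fun i _ => ?_)
    exact Measurable.ite (measurableSet_le (measurable_pi_apply i) measurable_const)
      measurable_const measurable_const
  · simp only [descStat_of_le hj, measurable_const]

lemma descStat_comp_monotone {f : ℝ → ℝ} (hf : Monotone f) (x : Fin m → ℝ) {j : ℕ} (hj : j < m) :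
    descStat (f ∘ x) j = f (descStat x j) := by
  have hsort : (f ∘ x) ∘ Tuple.sort x = (f ∘ x) ∘ Tuple.sort (f ∘ x) :=
    Tuple.comp_sort_eq_comp_iff_monotone.2 (hf.comp (Tuple.monotone_sort x))
  rw [descStat, descStat, dif_pos hj, dif_pos hj, ← hsort]
  rfl

lemma descStat_insertNth_zero (i : Fin (m + 1)) {w : Fin m → ℝ} (hw : ∀ k, 0 ≤ w k) (j : ℕ) :
    descStat (i.insertNth (α := fun _ => ℝ) 0 w) j = descStat w j := by
  have hcard (t : ℝ) : Finset.card {k | i.insertNth (α := fun _ => ℝ) 0 w k ≤ t} =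
      (if 0 ≤ t then 1 else 0) + Finset.card {k | w k ≤ t} := by
    simp only [Finset.card_filter, Fin.sum_univ_succAbove _ i, Fin.insertNth_apply_same,
      Fin.insertNth_apply_succAbove]
  have hneg {t : ℝ} (ht : ¬ 0 ≤ t) : Finset.card {k | w k ≤ t} = 0 := by
    simpa using fun k => (not_le.1 ht).trans_le (hw k)
  rcases lt_trichotomy j m with hj | rfl | hj
  · refine eq_of_forall_ge_iff fun t => ?_
    rw [descStat_le_iff (hj.trans (Nat.lt_succ_self m)), descStat_le_iff hj, hcard]
    split_ifs with ht
    · omega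
    · rw [hneg ht]; omega
  · rw [descStat_of_le le_rfl]
    refine eq_of_forall_ge_iff fun t => ?_
    rw [descStat_le_iff (Nat.lt_succ_self j), hcard]
    split_ifs with ht
    · simp only [ht, iff_true]; omega
    · simp only [ht, hneg ht, iff_false]; omega
  · rw [descStat_of_le hj, descStat_of_le hj.le]

lemma Km_comp_perm (K : (Fin q → ℝ) → ℝ) (σ : Equiv.Perm (Fin m)) (x : Fin m → ℝ) :
    Km K m (x ∘ σ) = Km K m x := by
  simp only [Km, descStat_comp_perm]

lemma measurable_Km {K : (Fin q → ℝ) → ℝ} (hK : Measurable K) (m : ℕ) : Measurable (Km K m) :=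
  hK.comp (measurable_pi_lambda _ fun j => measurable_descStat m j)

lemma LocScaleInvariant.Km_affine {K : (Fin q → ℝ) → ℝ} (hK : LocScaleInvariant K) (hqm : q ≤ m)
    {a : ℝ} (ha : 0 < a) (b : ℝ) (x : Fin m → ℝ) :
    Km K m (fun i => a * x i + b) = Km K m x := by
  have hmono : Monotone fun y : ℝ => a * y + b := fun y z hyz => by dsimp only; gcongr
  have hstat : (fun j : Fin q => descStat (fun i => a * x i + b) j) =
      fun j : Fin q => a * descStat x j + b :=
    funext fun j => descStat_comp_monotone hmono x (j.2.trans_le hqm)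
  rw [Km, Km, hstat, hK a b ha]

lemma Km_insertNth_zero (K : (Fin q → ℝ) → ℝ) (i : Fin (m + 1)) {w : Fin m → ℝ}
    (hw : ∀ k, 0 ≤ w k) : Km K (m + 1) (i.insertNth (α := fun _ => ℝ) 0 w) = Km K m w := by
  simp only [Km, descStat_insertNth_zero i hw]

end OrderStatistics

section MinimumOfIndependentVariables

lemma restrict_univ_pi_eq_smul_map {α : Type*} [MeasurableSpace α] {μ : Measure α}
    [IsProbabilityMeasure μ] {s : Set α} {f : α → α} (hf : Measurable f) {c : ℝ≥0∞}
    (h : μ.restrict s = c • μ.map f) (n : ℕ) :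
    (Measure.pi fun _ : Fin n => μ).restrict (univ.pi fun _ => s) =
      c ^ n • (Measure.pi fun _ : Fin n => μ).map fun w k => f (w k) := by
  have := Measure.isProbabilityMeasure_map (μ := μ) hf.aemeasurable
  rw [Measure.restrict_pi_pi, Measure.pi_map_pi (f := fun _ => f) fun _ => hf.aemeasurable]
  refine Measure.pi_eq fun t _ => ?_
  simp only [h, Measure.smul_apply, Measure.pi_pi, smul_eq_mul, Finset.prod_mul_distrib,
    Finset.prod_const, Finset.card_univ, Fintype.card_fin]

lemma lintegral_pi_eq_lintegral_insertNth {α : Type*} [MeasurableSpace α] {μ : Measure α}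
    [SigmaFinite μ] {n : ℕ} (i : Fin (n + 1)) {Φ : (Fin (n + 1) → α) → ℝ≥0∞}
    (hΦ : Measurable Φ) :
    ∫⁻ x, Φ x ∂(Measure.pi fun _ => μ) =
      ∫⁻ a, ∫⁻ y, Φ (i.insertNth (α := fun _ => α) a y) ∂(Measure.pi fun _ => μ) ∂μ := by
  rw [← (measurePreserving_piFinSuccAbove (fun _ => μ) i).symm.lintegral_comp hΦ]
  exact lintegral_prod _ (hΦ.comp (MeasurableEquiv.measurable _)).aemeasurable

/-- The tuples whose smallest entry has index `i`; ties are resolved in favour of the smaller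
index, so that these sets partition the space of tuples. -/
def argminSet (α : Type*) [LinearOrder α] {n : ℕ} (i : Fin n) : Set (Fin n → α) :=
  {x | ∀ k, k ≠ i → toLex (x i, i) < toLex (x k, k)}

lemma pairwise_disjoint_argminSet (α : Type*) [LinearOrder α] (n : ℕ) :
    Pairwise (Function.onFun Disjoint fun i : Fin n => argminSet α i) := fun i j hij =>
  Set.disjoint_left.2 fun _ hi hj => lt_asymm (hi j hij.symm) (hj i hij)

lemma iUnion_argminSet (α : Type*) [LinearOrder α] (n : ℕ) :
    ⋃ i : Fin (n + 1), argminSet α i = univ := by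
  refine eq_univ_of_forall fun x => mem_iUnion.2 ?_
  obtain ⟨i, hi⟩ := Finite.exists_min fun k => toLex (x k, k)
  refine ⟨i, fun k hki => (hi k).lt_of_ne fun h => hki ?_⟩
  exact (congrArg Prod.snd (toLex.injective h)).symm

lemma insertNth_mem_argminSet_iff {α : Type*} [LinearOrder α] {n : ℕ} {i : Fin (n + 1)} {a : α}
    {y : Fin n → α} : i.insertNth (α := fun _ => α) a y ∈ argminSet α i ↔
      y ∈ univ.pi fun k => if i < i.succAbove k then Ici a else Ioi a := by
  simp only [argminSet, mem_ofPred_eq, mem_univ_pi, i.forall_iff_succAbove, ne_eq,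
    not_true_eq_false, IsEmpty.forall_iff, Fin.succAbove_ne, not_false_eq_true, forall_const,
    true_and, Fin.insertNth_apply_same, Fin.insertNth_apply_succAbove,
    Prod.Lex.toLex_lt_toLex]
  refine forall_congr' fun k => ?_
  split_ifs with hk
  · simp only [hk, and_true, mem_Ici, le_iff_lt_or_eq]
  · simp only [hk, and_false, or_false, mem_Ioi]

variable {α : Type*} [LinearOrder α] [MeasurableSpace α] [TopologicalSpace α]
  [OrderClosedTopology α] [OpensMeasurableSpace α] [SecondCountableTopology α]

lemma measurableSet_argminSet {n : ℕ} (i : Fin n) : MeasurableSet (argminSet α i) := by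
  simp only [argminSet, ofPred_forall, Prod.Lex.toLex_lt_toLex]
  refine MeasurableSet.iInter fun k => MeasurableSet.iInter fun _ => ?_
  exact (measurableSet_lt (measurable_pi_apply i) (measurable_pi_apply k)).union
    ((measurableSet_eq_fun (measurable_pi_apply i) (measurable_pi_apply k)).inter
      (MeasurableSet.const _))

lemma lintegral_pi_eq_sum_lintegral_min (μ : Measure α) [SigmaFinite μ] [NullSingletonClass μ]
    {n : ℕ} {Φ : (Fin (n + 1) → α) → ℝ≥0∞} (hΦ : Measurable Φ) :
    ∫⁻ x, Φ x ∂(Measure.pi fun _ => μ) =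
      ∑ i : Fin (n + 1), ∫⁻ a, ∫⁻ y in univ.pi fun _ => Ici a,
        Φ (i.insertNth (α := fun _ => α) a y) ∂(Measure.pi fun _ => μ) ∂μ := by
  have hslice (i : Fin (n + 1)) (a : α) :
      (univ.pi fun k => if i < i.succAbove k then Ici a else Ioi a) =ᵐ[Measure.pi fun _ => μ]
        univ.pi fun _ => Ici a := by
    refine Measure.ae_eq_set_pi fun k _ => ?_
    split_ifs
    exacts [ae_eq_refl _, Ioi_ae_eq_Ici]
  have hmeas (a : α) (p : Prop) [Decidable p] : MeasurableSet (if p then Ici a else Ioi a) := by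
    split_ifs
    exacts [measurableSet_Ici, measurableSet_Ioi]
  rw [← setLIntegral_univ, ← iUnion_argminSet, lintegral_iUnion measurableSet_argminSet
    (pairwise_disjoint_argminSet α _), tsum_fintype]
  refine Finset.sum_congr rfl fun i _ => ?_
  rw [← lintegral_indicator (measurableSet_argminSet i), lintegral_pi_eq_lintegral_insertNth i
    (hΦ.indicator (measurableSet_argminSet i))]
  refine lintegral_congr fun a => ?_
  rw [← setLIntegral_congr (hslice i a), ← lintegral_indicator
    (MeasurableSet.univ_pi fun k => hmeas a _)]
  simp only [indicator, insertNth_mem_argminSet_iff]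

lemma sum_lintegral_measure_Ici_pow (μ : Measure α) [IsProbabilityMeasure μ] [NullSingletonClass μ]
    (n : ℕ) : ∑ _i : Fin (n + 1), ∫⁻ a, μ (Ici a) ^ n ∂μ = 1 := by
  have h := lintegral_pi_eq_sum_lintegral_min μ (n := n) (Φ := 1) measurable_one
  simp only [Pi.one_apply, lintegral_one, Measure.restrict_apply_univ, Measure.pi_pi,
    Finset.prod_const, Finset.card_univ, Fintype.card_fin, measure_univ] at h
  exact h.symm

/-- The minimum `a` of an i.i.d. sample is equally likely to have any index and, given `a`, the
other entries are i.i.d. with the law of an excess over `a`. -/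
lemma identDistrib_pi_succ {β : Type*} [MeasurableSpace β] {μ : Measure α}
    [IsProbabilityMeasure μ] [NullSingletonClass μ] {n : ℕ} {f : α → α → α}
    (hf : ∀ a, Measurable (f a)) (hμ : ∀ᵐ a ∂μ, μ.restrict (Ici a) = μ (Ici a) • μ.map (f a))
    {T : (Fin (n + 1) → α) → β} (hT : Measurable T) {S : (Fin n → α) → β} (hS : Measurable S)
    (hTS : ∀ i : Fin (n + 1), ∀ᵐ a ∂μ, ∀ᵐ w ∂Measure.pi fun _ => μ,
      T (i.insertNth (α := fun _ => α) a fun k => f a (w k)) = S w) :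
    IdentDistrib T S (Measure.pi fun _ => μ) (Measure.pi fun _ => μ) := by
  refine ⟨hT.aemeasurable, hS.aemeasurable, Measure.ext_of_lintegral _ fun g hg => ?_⟩
  rw [lintegral_map hg hT, lintegral_map hg hS,
    lintegral_pi_eq_sum_lintegral_min μ (Φ := fun x => g (T x)) (hg.comp hT)]
  set I := ∫⁻ w, g (S w) ∂Measure.pi fun _ => μ
  have hinner (i : Fin (n + 1)) : ∀ᵐ a ∂μ, ∫⁻ y in univ.pi fun _ => Ici a,
      g (T (i.insertNth (α := fun _ => α) a y)) ∂(Measure.pi fun _ => μ) = μ (Ici a) ^ n * I := by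
    filter_upwards [hμ, hTS i] with a ha hTa
    have hins : Measurable fun y => g (T (i.insertNth (α := fun _ => α) a y)) :=
      hg.comp <| hT.comp <|
        (MeasurableEquiv.piFinSuccAbove (fun _ => α) i).symm.measurable.comp measurable_prodMk_left
    rw [restrict_univ_pi_eq_smul_map (hf a) ha, lintegral_smul_measure, smul_eq_mul,
      lintegral_map hins (by fun_prop)]
    exact congrArg _ (lintegral_congr_ae (hTa.mono fun w hw => congrArg g hw))
  have htail : Measurable fun a => μ (Ici a) ^ n :=
    (measurable_measure_prodMk_left (measurableSet_le measurable_fst measurable_snd)).pow_const n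
  simp only [lintegral_congr_ae (hinner _), lintegral_mul_const _ htail]
  rw [← Finset.sum_mul, sum_lintegral_measure_Ici_pow, one_mul]

end MinimumOfIndependentVariables

section ParetoExcesses

variable {t r x : ℝ}

lemma restrict_Ici_paretoMeasure_eq_smul_paretoMeasure (ht : 0 < t) (htx : t ≤ x) :
    (paretoMeasure t r).restrict (Ici x) = ENNReal.ofReal ((t / x) ^ r) • paretoMeasure x r := by
  have hx : 0 < x := ht.trans_le htx
  have hmeas : Measurable (paretoPDF x r) := (measurable_paretoPDFReal x r).ennreal_ofReal
  rw [paretoMeasure, paretoMeasure, restrict_withDensity measurableSet_Ici,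
    ← withDensity_indicator measurableSet_Ici, ← withDensity_smul _ hmeas]
  congr 1
  funext y
  rcases lt_or_ge y x with hy | hy
  · simp [hy, paretoPDF_of_lt]
  · rw [indicator_of_mem (mem_Ici.2 hy), Pi.smul_apply, paretoPDF_of_le (htx.trans hy),
      paretoPDF_of_le hy, smul_eq_mul, ← ENNReal.ofReal_mul (by positivity),
      Real.div_rpow ht.le hx.le]
    congr 1
    field_simp

lemma paretoMeasure_Ici_of_le (ht : 0 < t) (hr : 0 < r) (htx : t ≤ x) :
    paretoMeasure t r (Ici x) = ENNReal.ofReal ((t / x) ^ r) := by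
  have := isProbabilityMeasure_paretoMeasure (ht.trans_le htx) hr
  rw [← Measure.restrict_apply_univ, restrict_Ici_paretoMeasure_eq_smul_paretoMeasure ht htx,
    Measure.smul_apply, measure_univ, smul_eq_mul, mul_one]

lemma ae_le_paretoMeasure (ht : 0 < t) (hr : 0 < r) : ∀ᵐ y ∂paretoMeasure t r, t ≤ y := by
  have := isProbabilityMeasure_paretoMeasure ht hr
  refine (mem_ae_iff_prob_eq_one measurableSet_Ici).2 ?_
  simp [paretoMeasure_Ici_of_le ht hr le_rfl, ht.ne']

lemma paretoMeasure_Ici (ht : 0 < t) (hr : 0 < r) (x : ℝ) :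
    paretoMeasure t r (Ici x) = ENNReal.ofReal ((t / max t x) ^ r) := by
  rcases le_total t x with h | h
  · rw [max_eq_right h, paretoMeasure_Ici_of_le ht hr h]
  · have := isProbabilityMeasure_paretoMeasure ht hr
    rw [max_eq_left h, div_self ht.ne', Real.one_rpow, ENNReal.ofReal_one]
    exact (mem_ae_iff_prob_eq_one measurableSet_Ici).1 <|
      (ae_le_paretoMeasure ht hr).mono fun y hy => h.trans hy

lemma map_mul_paretoMeasure (ht : 0 < t) (hr : 0 < r) {a : ℝ} (ha : 0 < a) :
    (paretoMeasure t r).map (fun y => a * y) = paretoMeasure (a * t) r := by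
  have := isProbabilityMeasure_paretoMeasure ht hr
  have := isProbabilityMeasure_paretoMeasure (mul_pos ha ht) hr
  refine Measure.ext_of_Ici _ _ fun y => ?_
  rw [Measure.map_apply (measurable_const_mul a) measurableSet_Ici,
    preimage_const_mul_Ici₀ _ ha, paretoMeasure_Ici ht hr, paretoMeasure_Ici (mul_pos ha ht) hr,
    ← mul_div_mul_left t _ ha.ne', mul_max_of_nonneg _ _ ha.le, mul_div_cancel₀ y ha.ne']

lemma restrict_Ici_paretoMeasure_eq_smul_map (ht : 0 < t) (hr : 0 < r) (htx : t ≤ x) :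
    (paretoMeasure t r).restrict (Ici x) =
      paretoMeasure t r (Ici x) • (paretoMeasure t r).map fun y => x / t * y := by
  rw [restrict_Ici_paretoMeasure_eq_smul_paretoMeasure ht htx, paretoMeasure_Ici_of_le ht hr htx,
    map_mul_paretoMeasure ht hr (div_pos (ht.trans_le htx) ht), div_mul_cancel₀ x ht.ne']

end ParetoExcesses

section ThresholdStability

variable {q : ℕ} {K : (Fin q → ℝ) → ℝ}

lemma hGamma_mul (γ : ℝ) {a w : ℝ} (ha : 0 < a) (hw : 0 < w) :
    hGamma γ (a * w) = a ^ γ * hGamma γ w + hGamma γ a := by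
  unfold hGamma
  split_ifs with hγ
  · rw [hγ, Real.rpow_zero, Real.log_mul ha.ne' hw.ne']
    ring
  · rw [Real.mul_rpow ha.le hw.le]
    field_simp
    ring

lemma hGamma_nonneg (γ : ℝ) {w : ℝ} (hw : 1 ≤ w) : 0 ≤ hGamma γ w := by
  unfold hGamma
  split_ifs
  · exact Real.log_nonneg hw
  · rcases le_total γ 0 with hγ | hγ
    · exact div_nonneg_of_nonpos
        (sub_nonpos.2 (Real.rpow_le_one_of_one_le_of_nonpos hw hγ)) hγ
    · exact div_nonneg (sub_nonneg.2 (Real.one_le_rpow hw hγ)) hγ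

lemma measurePreserving_hGamma_gpPi (γ : ℝ) (n : ℕ) :
    MeasurePreserving (fun (y : Fin n → ℝ) k => hGamma γ (y k)) (Measure.pi fun _ => pareto1)
      (gpPi γ n) :=
  measurePreserving_pi (fun _ => pareto1) (fun _ => gpMeasure γ)
    fun _ => ⟨measurable_hGamma γ, rfl⟩

/-- Conditionally on its minimum, a `GP(γ)` sample is an affine image of a smaller `GP(γ)` sample
and of its lower endpoint `0`. -/
lemma LocScaleInvariant.Km_hGamma_insertNth (hLS : LocScaleInvariant K) (γ : ℝ) {n : ℕ}
    (hn : q ≤ n + 1) (i : Fin (n + 1)) {a : ℝ} (ha : 0 < a) {w : Fin n → ℝ} (hw : ∀ k, 1 ≤ w k) :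
    Km K (n + 1) (fun k => hGamma γ (i.insertNth (α := fun _ => ℝ) a (fun k => a * w k) k)) =
      Km K n fun k => hGamma γ (w k) := by
  have haffine : (fun k => hGamma γ (i.insertNth (α := fun _ => ℝ) a (fun k => a * w k) k)) =
      fun k => a ^ γ * i.insertNth (α := fun _ => ℝ) 0 (fun k => hGamma γ (w k)) k +
        hGamma γ a := by
    funext k
    refine i.succAboveCases ?_ (fun k => ?_) k
    · simp
    · simp [hGamma_mul γ ha (one_pos.trans_le (hw k))]
  rw [haffine, hLS.Km_affine hn (Real.rpow_pos_of_pos ha γ),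
    Km_insertNth_zero K i fun k => hGamma_nonneg γ (hw k)]

lemma LocScaleInvariant.identDistrib_Km_succ (hLS : LocScaleInvariant K) (hK : Measurable K)
    (γ : ℝ) {n : ℕ} (hn : q ≤ n + 1) :
    IdentDistrib (Km K (n + 1)) (Km K n) (gpPi γ (n + 1)) (gpPi γ n) := by
  have : NullSingletonClass pareto1 := by unfold pareto1 paretoMeasure; infer_instance
  have hge : ∀ᵐ a ∂pareto1, 1 ≤ a := ae_le_paretoMeasure one_pos one_pos
  have hgePi : ∀ᵐ w ∂Measure.pi fun _ : Fin n => pareto1, ∀ k, 1 ≤ w k :=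
    ae_all_iff.2 fun k => (Measure.tendsto_eval_ae_ae (i := k)).eventually hge
  have hmp (k : ℕ) := measurePreserving_hGamma_gpPi γ k
  have hmeas (k : ℕ) := measurable_Km hK k
  have hPareto : IdentDistrib (Km K (n + 1) ∘ fun y k => hGamma γ (y k))
      (Km K n ∘ fun y k => hGamma γ (y k)) (Measure.pi fun _ => pareto1)
      (Measure.pi fun _ => pareto1) := by
    refine identDistrib_pi_succ (f := fun a y => a * y) measurable_const_mul ?_
      ((hmeas _).comp (hmp _).measurable) ((hmeas _).comp (hmp _).measurable) fun i => ?_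
    · filter_upwards [hge] with a ha
      simpa only [pareto1, div_one] using restrict_Ici_paretoMeasure_eq_smul_map one_pos one_pos ha
    · filter_upwards [hge] with a ha
      filter_upwards [hgePi] with w hw
      exact hLS.Km_hGamma_insertNth γ hn i (one_pos.trans_le ha) hw
  refine ⟨(hmeas _).aemeasurable, (hmeas _).aemeasurable, ?_⟩
  rw [← (hmp (n + 1)).map_eq, ← (hmp n).map_eq, Measure.map_map (hmeas _) (hmp _).measurable,
    Measure.map_map (hmeas _) (hmp _).measurable]
  exact hPareto.map_eq

lemma LocScaleInvariant.identDistrib_Km_refVec (hLS : LocScaleInvariant K) (hK : Measurable K)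
    (γ : ℝ) {m : ℕ} (hm : q - 1 ≤ m) :
    IdentDistrib (Km K m) (fun z => K (refVec z)) (gpPi γ m) (gpPi γ (q - 1)) := by
  induction m, hm using Nat.le_induction with
  | base => exact IdentDistrib.refl (measurable_Km hK _).aemeasurable
  | succ n hn ih => exact (hLS.identDistrib_Km_succ hK γ (by omega)).trans ih

end ThresholdStability

section ForwardDifferences

lemma descFactorial_mul_pow_le {l m i j : ℕ} (hlm : l ≤ m) (hij : i ≤ j) :
    l.descFactorial j * m ^ i ≤ l ^ i * m.descFactorial j := by
  induction j generalizing i with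
  | zero => simp [Nat.le_zero.1 hij]
  | succ j ih =>
    rw [Nat.descFactorial_succ, Nat.descFactorial_succ]
    cases i with
    | zero =>
      have := ih j.zero_le
      rw [pow_zero, pow_zero, mul_one, one_mul] at this ⊢
      gcongr
    | succ i =>
      have hfactor : (l - j) * m ≤ l * (m - j) := by
        rw [Nat.sub_mul, Nat.mul_sub]
        exact Nat.sub_le_sub_left (by rw [mul_comm l]; gcongr) _
      calc (l - j) * l.descFactorial j * m ^ (i + 1)
          = (l - j) * m * (l.descFactorial j * m ^ i) := by ring
        _ ≤ l * (m - j) * (l ^ i * m.descFactorial j) :=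
          Nat.mul_le_mul hfactor (ih (Nat.le_of_succ_le_succ hij))
        _ = l ^ (i + 1) * ((m - j) * m.descFactorial j) := by ring

lemma choose_mul_pow_le {l m i j : ℕ} (hlm : l ≤ m) (hij : i ≤ j) :
    l.choose j * m ^ i ≤ l ^ i * m.choose j := by
  refine Nat.le_of_mul_le_mul_left ?_ j.factorial_pos
  rw [← mul_assoc, ← Nat.descFactorial_eq_factorial_mul_choose, mul_left_comm,
    ← Nat.descFactorial_eq_factorial_mul_choose]
  exact descFactorial_mul_pow_le hlm hij

lemma newton_expansion_second_order {R : Type*} [CommRing R] (η : ℕ → R) (n : ℕ) :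
    η n - η 0 = n * (η 1 - η 0) +
      ∑ k ∈ Finset.Ico 2 (n + 1), (n.choose k : R) * (fwdDiff 1)^[k] η 0 := by
  have hnewton : η n = ∑ k ∈ Finset.range (n + 1), (n.choose k : R) * (fwdDiff 1)^[k] η 0 := by
    simpa using shift_eq_sum_fwdDiff_iter (h := 1) η n 0
  rcases n.eq_zero_or_pos with rfl | hn
  · simp
  · rw [Finset.range_eq_Ico, Finset.sum_eq_sum_Ico_succ_bot n.succ_pos,
      Finset.sum_eq_sum_Ico_succ_bot (Nat.succ_lt_succ hn)] at hnewton
    simp only [Nat.choose_zero_right, Nat.cast_one, one_mul, Function.iterate_zero, id_eq,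
      zero_add, Nat.choose_one_right, Function.iterate_one, fwdDiff] at hnewton
    linear_combination hnewton

lemma mul_abs_inv_mul_sub_le_of_fwdDiff_nonneg {η : ℕ → ℝ} {l m : ℕ} (hl : 1 ≤ l) (hlm : l ≤ m)
    (hη : ∀ k ∈ Finset.Icc 1 m, 0 ≤ (fwdDiff 1)^[k] η 0) :
    m * |(l : ℝ)⁻¹ * (η l - η 0) - (η 1 - η 0)| ≤ l / m * (η m - η 0) := by
  have hl0 : (0 : ℝ) < l := by exact_mod_cast hl
  have hm0 : (0 : ℝ) < m := by exact_mod_cast hl.trans hlm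
  set R : ℕ → ℝ := fun n => ∑ k ∈ Finset.Ico 2 (n + 1), (n.choose k : ℝ) * (fwdDiff 1)^[k] η 0
    with hR
  have hexpand (n : ℕ) : η n - η 0 = n * (η 1 - η 0) + R n := newton_expansion_second_order η n
  have hdiff {k : ℕ} (hk : k ∈ Finset.Ico 2 (m + 1)) : 0 ≤ (fwdDiff 1)^[k] η 0 :=
    hη k (by simp only [Finset.mem_Ico, Finset.mem_Icc] at hk ⊢; omega)
  have hsub : Finset.Ico 2 (l + 1) ⊆ Finset.Ico 2 (m + 1) :=
    Finset.Ico_subset_Ico_right (by omega)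
  have hRl : 0 ≤ R l := Finset.sum_nonneg fun k hk => mul_nonneg (by positivity) (hdiff (hsub hk))
  have hRlm : R l * m ^ 2 ≤ l ^ 2 * R m := by
    simp only [hR, Finset.sum_mul, Finset.mul_sum]
    refine (Finset.sum_le_sum fun k hk => ?_).trans
      (Finset.sum_le_sum_of_subset_of_nonneg hsub fun k hk _ => ?_)
    · have hchoose : (l.choose k : ℝ) * m ^ 2 ≤ l ^ 2 * m.choose k := by
        exact_mod_cast choose_mul_pow_le hlm (Finset.mem_Ico.1 hk).1
      rw [mul_right_comm, ← mul_assoc]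
      exact mul_le_mul_of_nonneg_right hchoose (hdiff (hsub hk))
    · have := hdiff hk
      positivity
  have hη1 : 0 ≤ η 1 - η 0 := by
    simpa [fwdDiff] using hη 1 (Finset.mem_Icc.2 ⟨le_rfl, hl.trans hlm⟩)
  calc m * |(l : ℝ)⁻¹ * (η l - η 0) - (η 1 - η 0)|
      = m * ((l : ℝ)⁻¹ * R l) := by
        rw [hexpand, mul_add, inv_mul_cancel_left₀ hl0.ne', add_sub_cancel_left,
          abs_of_nonneg (by positivity)]
    _ = R l * m ^ 2 / (l * m) := by field_simp
    _ ≤ l ^ 2 * R m / (l * m) := by gcongr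
    _ = l / m * R m := by field_simp
    _ ≤ l / m * (η m - η 0) := by
        have : 0 ≤ m * (η 1 - η 0) := by positivity
        gcongr
        linarith [hexpand m]

end ForwardDifferences

/-- `η` is of positive type of order `m` if the kernel `(S, T) ↦ η #(S ∩ T)` is positive
semidefinite on the sets of `m` natural numbers. -/
def IsPositiveType (m : ℕ) (η : ℕ → ℝ) : Prop :=
  ∀ (ι : Type) [Fintype ι] (S : ι → Finset ℕ) (c : ι → ℝ), (∀ i, (S i).card = m) →
    0 ≤ ∑ i, ∑ j, c i * c j * η (S i ∩ S j).card

namespace IsPositiveType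

variable {m : ℕ} {η : ℕ → ℝ}

/-- Add to each set of the family one of two new points, with opposite signs. -/
protected lemma fwdDiff (h : IsPositiveType (m + 1) η) : IsPositiveType m (fwdDiff 1 η) := by
  intro ι _ S c hS
  let e : ℕ ↪ ℕ := addRightEmbedding 2
  have hnew (A : Finset ℕ) (b : Bool) : b.toNat ∉ A.map e := by
    have := b.toNat_le
    simp only [Finset.mem_map, e, addRightEmbedding_apply, not_exists, not_and]
    omega
  let T : ι × Bool → Finset ℕ := fun p => insert p.2.toNat ((S p.1).map e)
  have hT (p : ι × Bool) : (T p).card = m + 1 := by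
    simp only [T, Finset.card_insert_of_notMem (hnew _ _), Finset.card_map, hS]
  have hsame (i j : ι) (b : Bool) : (T (i, b) ∩ T (j, b)).card = (S i ∩ S j).card + 1 := by
    simp only [T, ← Finset.insert_inter_distrib, ← Finset.map_inter,
      Finset.card_insert_of_notMem (hnew _ _), Finset.card_map]
  have hdiff (i j : ι) (b : Bool) : (T (i, b) ∩ T (j, !b)).card = (S i ∩ S j).card := by
    have hb : b.toNat ∉ insert (!b).toNat ((S j).map e) := by
      rw [Finset.mem_insert, not_or]
      exact ⟨by cases b <;> simp, hnew _ _⟩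
    simp only [T]
    rw [Finset.insert_inter_of_notMem hb, Finset.inter_insert_of_notMem (hnew _ _),
      ← Finset.map_inter, Finset.card_map]
  have hpos := h (ι × Bool) T (fun p => if p.2 then c p.1 else -c p.1) hT
  have hsum (i j : ι) : (∑ b, ∑ b', (if b then c i else -c i) * (if b' then c j else -c j) *
      η (T (i, b) ∩ T (j, b')).card) = 2 * (c i * c j * fwdDiff 1 η (S i ∩ S j).card) := by
    have htf := hdiff i j true
    have hft := hdiff i j false
    simp only [Bool.not_true, Bool.not_false] at htf hft
    simp only [Fintype.sum_bool, if_true, Bool.false_eq_true, if_false, hsame, htf, hft, fwdDiff]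
    ring
  simp only [Fintype.sum_prod_type] at hpos
  have : 0 ≤ 2 * ∑ i, ∑ j, c i * c j * fwdDiff 1 η (S i ∩ S j).card := by
    convert hpos using 1
    simp only [Finset.mul_sum, ← hsum]
    exact Finset.sum_congr rfl fun i _ => Finset.sum_comm
  linarith

/-- Pairwise disjoint sets make the quadratic form `N ^ 2 * η 0 + N * (η m - η 0)`. -/
lemma zero_nonneg (h : IsPositiveType m η) : 0 ≤ η 0 := by
  have hdisj : Pairwise fun i j : ℕ =>
      Disjoint (Finset.Ico (i * m) ((i + 1) * m)) (Finset.Ico (j * m) ((j + 1) * m)) := by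
    intro i j hij
    rw [← Finset.disjoint_coe, Finset.coe_Ico, Finset.coe_Ico]
    exact (monotone_mul_right_of_nonneg m.zero_le).pairwise_disjoint_on_Ico_succ hij
  have hblocks (N : ℕ) : 0 ≤ N * (N * η 0 + (η m - η 0)) := by
    have hinter (i j : Fin N) : η (Finset.Ico (i * m) ((i + 1) * m) ∩
        Finset.Ico (j * m) ((j + 1) * m)).card = η 0 + if i = j then η m - η 0 else 0 := by
      split_ifs with hij
      · simp [hij, add_mul]
      · rw [Finset.disjoint_iff_inter_eq_empty.1 (hdisj (Fin.val_ne_of_ne hij)),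
          Finset.card_empty, add_zero]
    have := h (Fin N) (fun i => Finset.Ico (i * m) ((i + 1) * m)) (fun _ => 1)
      fun i => by simp [add_mul]
    simpa [hinter, Finset.sum_add_distrib, mul_add] using this
  have hlim : Tendsto (fun N : ℕ => η 0 + (η m - η 0) / N) atTop (𝓝 (η 0)) := by
    simpa using tendsto_const_nhds.add (tendsto_const_div_atTop_nhds_zero_nat (η m - η 0))
  refine ge_of_tendsto hlim ?_
  filter_upwards [eventually_gt_atTop 0] with N hN
  calc 0 ≤ N * (N * η 0 + (η m - η 0)) / (N : ℝ) ^ 2 := div_nonneg (hblocks N) (sq_nonneg _)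
    _ = η 0 + (η m - η 0) / N := by field_simp

lemma fwdDiff_iterate_zero_nonneg (h : IsPositiveType m η) {k : ℕ} (hk : k ≤ m) :
    0 ≤ (fwdDiff 1)^[k] η 0 := by
  induction k generalizing m η with
  | zero => exact h.zero_nonneg
  | succ k ih =>
    obtain ⟨m, rfl⟩ := Nat.exists_eq_add_of_le' (k.succ_pos.trans_le hk)
    exact ih h.fwdDiff (Nat.le_of_succ_le_succ hk)

end IsPositiveType

section SymmetricKernels

lemma apply_comp_eq_of_range_eq {ι κ E β : Type*} {h : (ι → E) → β}
    (hsymm : ∀ (σ : Equiv.Perm ι) x, h (x ∘ σ) = h x) {u v : ι → κ}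
    (hu : u.Injective) (hv : v.Injective) (huv : range u = range v) (z : κ → E) :
    h (z ∘ u) = h (z ∘ v) := by
  have hcomp : v ∘ ((Equiv.ofInjective u hu).trans
      ((Equiv.setCongr huv).trans (Equiv.ofInjective v hv).symm)) = u := by
    ext i
    simp [Equiv.apply_ofInjective_symm]
  rw [← hsymm _ (z ∘ v), Function.comp_assoc, hcomp]

lemma exists_perm_mem_iff_mem {α : Type*} [Infinite α] [DecidableEq α] {S T S' T' : Finset α}
    (hS : S.card = S'.card) (hT : T.card = T'.card)
    (hST : (S ∩ T).card = (S' ∩ T').card) :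
    ∃ σ : Equiv.Perm α, ∀ a, (σ a ∈ S' ↔ a ∈ S) ∧ (σ a ∈ T' ↔ a ∈ T) := by
  have hfiber (c : Bool × Bool) : Nonempty ({a // (decide (a ∈ S), decide (a ∈ T)) = c} ≃
      {a // (decide (a ∈ S'), decide (a ∈ T')) = c}) := by
    have of_card {U U' : Finset α} (hU : U.card = U'.card)
        (h : ∀ a, (decide (a ∈ S), decide (a ∈ T)) = c ↔ a ∈ U)
        (h' : ∀ a, (decide (a ∈ S'), decide (a ∈ T')) = c ↔ a ∈ U') :=
      Nonempty.intro (((Equiv.subtypeEquivRight h).trans (Finset.equivOfCardEq hU)).trans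
        (Equiv.subtypeEquivRight h').symm)
    rcases c with ⟨_ | _, _ | _⟩
    · rw [← Cardinal.eq]
      have hcompl (S T : Finset α) : {a | (decide (a ∈ S), decide (a ∈ T)) = (false, false)} =
          (↑(S ∪ T) : Set α)ᶜ := by ext; simp
      exact (congrArg (fun s : Set α => Cardinal.mk s) (hcompl S T)).trans
        (((Cardinal.mk_compl_finset_of_infinite _).trans
          (Cardinal.mk_compl_finset_of_infinite _).symm).trans
        (congrArg (fun s : Set α => Cardinal.mk s) (hcompl S' T')).symm)
    · refine of_card (U := T \ S) (U' := T' \ S') ?_ (by simp [and_comm]) (by simp [and_comm])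
      rw [Finset.card_sdiff, Finset.card_sdiff, hT, hST]
    · refine of_card (U := S \ T) (U' := S' \ T') ?_ (by simp) (by simp)
      rw [Finset.card_sdiff, Finset.card_sdiff, hS, Finset.inter_comm, hST, Finset.inter_comm]
    · exact of_card hST (by simp) (by simp)
  let e (c : Bool × Bool) := (hfiber c).some
  refine ⟨Equiv.ofFiberEquiv e, fun a => ?_⟩
  simpa using Equiv.ofFiberEquiv_map e a

variable {Ω E : Type*} [MeasurableSpace Ω] [MeasurableSpace E] {P : Measure Ω}

lemma identDistrib_comp_injective {κ ι : Type*} [Countable ι] {Z : κ → Ω → E}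
    (hIndep : iIndepFun Z P) (hIdent : ∀ i j, IdentDistrib (Z i) (Z j) P P) {u v : ι → κ}
    (hu : u.Injective) (hv : v.Injective) :
    IdentDistrib (fun ω i => Z (u i) ω) (fun ω i => Z (v i) ω) P P :=
  .pi (fun i => hIdent (u i) (v i)) (hIndep.precomp hu) (hIndep.precomp hv)

variable {m : ℕ} {h : (Fin m → E) → ℝ} {Z : ℕ → Ω → E}

lemma covariance_eq_of_card_inter_eq (hh : Measurable h)
    (hsymm : ∀ (σ : Equiv.Perm (Fin m)) x, h (x ∘ σ) = h x) (hIndep : iIndepFun Z P)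
    (hIdent : ∀ i j, IdentDistrib (Z i) (Z j) P P) {u v u' v' : Fin m ↪ ℕ}
    (hcard : (Finset.univ.map u ∩ Finset.univ.map v).card =
      (Finset.univ.map u' ∩ Finset.univ.map v').card) :
    cov[fun ω => h (fun i => Z (u i) ω), fun ω => h (fun i => Z (v i) ω); P] =
      cov[fun ω => h (fun i => Z (u' i) ω), fun ω => h (fun i => Z (v' i) ω); P] := by
  obtain ⟨σ, hσ⟩ := exists_perm_mem_iff_mem (by simp) (by simp) hcard
  have hrange {w w' : Fin m ↪ ℕ}
      (hw : ∀ k, σ k ∈ Finset.univ.map w' ↔ k ∈ Finset.univ.map w) :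
      range (σ ∘ w) = range w' := by
    rw [range_comp, Equiv.image_eq_preimage_symm]
    ext k
    simpa using (hw (σ.symm k)).symm
  have hmove {w w' : Fin m ↪ ℕ}
      (hw : ∀ k, σ k ∈ Finset.univ.map w' ↔ k ∈ Finset.univ.map w) (ω : Ω) :
      h (fun i => Z (σ (w i)) ω) = h (fun i => Z (w' i) ω) :=
    apply_comp_eq_of_range_eq hsymm (σ.injective.comp w.injective) w'.injective (hrange hw)
      (fun k => Z k ω)
  have hexch := identDistrib_comp_injective hIndep hIdent Function.injective_id σ.injective
  have hmeas (w : Fin m ↪ ℕ) : Measurable fun z : ℕ → E => h (fun i => z (w i)) := by fun_prop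
  have hcov {Y : Ω → ℕ → E} (hY : AEMeasurable Y P) :
      cov[fun ω => h (fun i => Y ω (u i)), fun ω => h (fun i => Y ω (v i)); P] =
        cov[fun z => h (fun i => z (u i)), fun z => h (fun i => z (v i)); P.map Y] :=
    (covariance_map_fun (hmeas u).aestronglyMeasurable (hmeas v).aestronglyMeasurable hY).symm
  simp only [← hmove (w := u) (w' := u') fun k => (hσ k).1,
    ← hmove (w := v) (w' := v') fun k => (hσ k).2]
  rw [hcov (Y := fun ω k => Z (σ k) ω) hexch.aemeasurable_snd, ← hexch.map_eq]
  exact hcov hexch.aemeasurable_fst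

/-- The covariance of the values of the kernel `h` at two blocks of `m` consecutive observations
that share `ℓ` observations; as in `zetaCov`, only `ℓ ≤ m` is meaningful. -/
def overlapCov (P : Measure Ω) (h : (Fin m → E) → ℝ) (Z : ℕ → Ω → E) (ℓ : ℕ) : ℝ :=
  cov[fun ω => h (fun i => Z i ω), fun ω => h (fun i => Z (m - ℓ + i) ω); P]

lemma memLp_two_comp_injective (hh : Measurable h) (hIndep : iIndepFun Z P)
    (hIdent : ∀ i j, IdentDistrib (Z i) (Z j) P P)
    (hL2 : MemLp (fun ω => h (fun i => Z i ω)) 2 P) {u : Fin m → ℕ} (hu : u.Injective) :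
    MemLp (fun ω => h (fun i => Z (u i) ω)) 2 P :=
  ((identDistrib_comp_injective hIndep hIdent Fin.val_injective hu).comp hh).memLp_iff.1 hL2

lemma covariance_eq_overlapCov (hh : Measurable h)
    (hsymm : ∀ (σ : Equiv.Perm (Fin m)) x, h (x ∘ σ) = h x) (hIndep : iIndepFun Z P)
    (hIdent : ∀ i j, IdentDistrib (Z i) (Z j) P P) (u v : Fin m ↪ ℕ) :
    cov[fun ω => h (fun i => Z (u i) ω), fun ω => h (fun i => Z (v i) ω); P] =
      overlapCov P h Z (Finset.univ.map u ∩ Finset.univ.map v).card := by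
  set ℓ := (Finset.univ.map u ∩ Finset.univ.map v).card
  have hℓ : ℓ ≤ m := (Finset.card_le_card Finset.inter_subset_left).trans (by simp)
  refine covariance_eq_of_card_inter_eq (u' := Fin.valEmbedding)
    (v' := Fin.valEmbedding.trans (addLeftEmbedding (m - ℓ))) hh hsymm hIndep hIdent ?_
  rw [← Finset.map_map, Fin.map_valEmbedding_univ, Nat.Iio_eq_range, Finset.range_eq_Ico,
    Finset.map_add_left_Ico, Finset.Ico_inter_Ico, Nat.card_Ico]
  omega

lemma isPositiveType_overlapCov (hh : Measurable h)
    (hsymm : ∀ (σ : Equiv.Perm (Fin m)) x, h (x ∘ σ) = h x) (hIndep : iIndepFun Z P)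
    (hIdent : ∀ i j, IdentDistrib (Z i) (Z j) P P)
    (hL2 : MemLp (fun ω => h (fun i => Z i ω)) 2 P) :
    IsPositiveType m (overlapCov P h Z) := by
  have := hIndep.isProbabilityMeasure
  intro ι _ S c hS
  let u (i : ι) : Fin m ↪ ℕ := ((S i).orderEmbOfFin (hS i)).toEmbedding
  have hu (i : ι) : Finset.univ.map (u i) = S i := Finset.map_orderEmbOfFin_univ _ (hS i)
  let X (i : ι) (ω : Ω) : ℝ := c i * h (fun k => Z (u i k) ω)
  have hX (i : ι) : MemLp (X i) 2 P :=
    (memLp_two_comp_injective hh hIndep hIdent hL2 (u i).injective).const_mul (c i)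
  have hXcov (i j : ι) : c i * c j * overlapCov P h Z (S i ∩ S j).card = cov[X i, X j; P] := by
    simp only [X, covariance_const_mul_left, covariance_const_mul_right,
      covariance_eq_overlapCov hh hsymm hIndep hIdent, hu]
    ring
  calc 0 ≤ Var[fun ω => ∑ i, X i ω; P] := variance_nonneg _ _
    _ = ∑ i, ∑ j, cov[X i, X j; P] := by
      rw [← covariance_self (memLp_finsetSum _ fun i _ => hX i).aemeasurable,
        covariance_fun_sum_fun_sum hX hX]
    _ = _ := by simp only [hXcov]

lemma overlapCov_zero (hh : Measurable h) (hIndep : iIndepFun Z P)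
    (hIdent : ∀ i j, IdentDistrib (Z i) (Z j) P P)
    (hL2 : MemLp (fun ω => h (fun i => Z i ω)) 2 P) :
    overlapCov P h Z 0 = 0 := by
  have := hIndep.isProbabilityMeasure
  have hinj : Function.Injective fun i : Fin m => m - 0 + (i : ℕ) :=
    (add_right_injective _).comp Fin.val_injective
  refine IndepFun.covariance_eq_zero ?_ hL2 (memLp_two_comp_injective hh hIndep hIdent hL2 hinj)
  have hdisj : Disjoint (Finset.range m) (Finset.Ico m (m + m)) := by
    rw [Finset.disjoint_left]
    simp only [Finset.mem_range, Finset.mem_Ico]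
    omega
  exact (hIndep.indepFun_finset₀ _ _ hdisj fun i => (hIdent i i).aemeasurable_fst).comp
    (φ := fun z => h fun i : Fin m => z ⟨i, Finset.mem_range.2 i.2⟩)
    (ψ := fun z => h fun i : Fin m =>
      z ⟨m - 0 + i, Finset.mem_Ico.2 ⟨le_self_add, Nat.add_lt_add_left i.2 m⟩⟩)
    (by fun_prop) (by fun_prop)

theorem mul_abs_inv_mul_overlapCov_sub_le (hh : Measurable h)
    (hsymm : ∀ (σ : Equiv.Perm (Fin m)) x, h (x ∘ σ) = h x) (hIndep : iIndepFun Z P)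
    (hIdent : ∀ i j, IdentDistrib (Z i) (Z j) P P)
    (hL2 : MemLp (fun ω => h (fun i => Z i ω)) 2 P) {ℓ : ℕ} (hℓ : 1 ≤ ℓ) (hℓm : ℓ ≤ m) :
    m * |(ℓ : ℝ)⁻¹ * overlapCov P h Z ℓ - overlapCov P h Z 1| ≤
      ℓ / m * Var[fun ω => h (fun i => Z i ω); P] := by
  have hpos := isPositiveType_overlapCov hh hsymm hIndep hIdent hL2
  have hself : overlapCov P h Z m = Var[fun ω => h (fun i => Z i ω); P] := by
    simp only [overlapCov, Nat.sub_self, zero_add, covariance_self hL2.aemeasurable]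
  simpa only [overlapCov_zero hh hIndep hIdent hL2, hself, sub_zero] using
    mul_abs_inv_mul_sub_le_of_fwdDiff_nonneg hℓ hℓm fun k hk =>
      hpos.fwdDiff_iterate_zero_nonneg (Finset.mem_Icc.1 hk).2

end SymmetricKernels

section UniformApproximation

variable {Ω : Type*} [MeasurableSpace Ω] {P : Measure Ω} {γ : ℝ} {q : ℕ}
  {K : (Fin q → ℝ) → ℝ} {Z : ℕ → Ω → ℝ}

lemma zetaCov_eq_overlapCov (hK : Measurable K) (hIndep : iIndepFun Z P)
    (hIdent : ∀ i j, IdentDistrib (Z i) (Z j) P P) {m : ℕ}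
    (hL2 : MemLp (fun ω => Km K m fun i => Z i ω) 2 P) (ℓ : ℕ) :
    zetaCov P K Z m ℓ = overlapCov P (Km K m) Z ℓ := by
  have := hIndep.isProbabilityMeasure
  have hinj : Function.Injective fun i : Fin m => m - ℓ + (i : ℕ) :=
    (add_right_injective _).comp Fin.val_injective
  exact (covariance_eq_sub hL2
    (memLp_two_comp_injective (measurable_Km hK m) hIndep hIdent hL2 hinj)).symm

lemma LocScaleInvariant.identDistrib_Km_sample (hLS : LocScaleInvariant K) (hK : Measurable K)
    (hIndep : iIndepFun Z P) (hLaw : ∀ i, HasLaw (Z i) (gpMeasure γ) P) {m : ℕ}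
    (hm : q - 1 ≤ m) :
    IdentDistrib (fun ω => Km K m fun i => Z i ω) (fun z => K (refVec z)) P
      (gpPi γ (q - 1)) := by
  have hsample : HasLaw (fun ω (i : Fin m) => Z i ω) (gpPi γ m) P :=
    (hIndep.precomp Fin.val_injective).hasLaw_pi fun i => hLaw i
  exact ((hsample.identDistrib .id).comp (measurable_Km hK m)).trans
    (hLS.identDistrib_Km_refVec hK γ hm)

lemma LocScaleInvariant.mul_abs_inv_mul_zetaCov_sub_le (hLS : LocScaleInvariant K)
    (hK : Measurable K) (hL2 : MemLp (fun z => K (refVec z)) 2 (gpPi γ (q - 1)))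
    (hIndep : iIndepFun Z P) (hLaw : ∀ i, HasLaw (Z i) (gpMeasure γ) P) {m ℓ : ℕ}
    (hm : q - 1 ≤ m) (hℓ : 1 ≤ ℓ) (hℓm : ℓ ≤ m) :
    m * |(ℓ : ℝ)⁻¹ * zetaCov P K Z m ℓ - zetaCov P K Z m 1| ≤
      ℓ / m * Var[fun z => K (refVec z); gpPi γ (q - 1)] := by
  have hIdent (i j : ℕ) : IdentDistrib (Z i) (Z j) P P := (hLaw i).identDistrib (hLaw j)
  have hsample := hLS.identDistrib_Km_sample hK hIndep hLaw hm
  have hL2' := hsample.memLp_iff.2 hL2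
  rw [zetaCov_eq_overlapCov hK hIndep hIdent hL2', zetaCov_eq_overlapCov hK hIndep hIdent hL2',
    ← hsample.variance_eq]
  exact mul_abs_inv_mul_overlapCov_sub_le (measurable_Km hK m) (Km_comp_perm K) hIndep hIdent
    hL2' hℓ hℓm

theorem zeta_uniform_approximation_general {β : Type*} {l : Filter β} {m L : β → ℕ}
    (hLS : LocScaleInvariant K) (hK : Measurable K)
    (hL2 : MemLp (fun z => K (refVec z)) 2 (gpPi γ (q - 1)))
    (hIndep : iIndepFun Z P) (hLaw : ∀ i, HasLaw (Z i) (gpMeasure γ) P)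
    (hL : (fun b => (L b : ℝ)) =o[l] fun b => (m b : ℝ)) :
    Tendsto (fun b => (m b : ℝ) * ⨆ ℓ ∈ Finset.Icc 1 (L b),
      |(ℓ : ℝ)⁻¹ * zetaCov P K Z (m b) ℓ - zetaCov P K Z (m b) 1|) l (𝓝 0) := by
  set V := Var[fun z => K (refVec z); gpPi γ (q - 1)]
  have hlim : Tendsto (fun b => L b / m b * V) l (𝓝 0) := by
    simpa using hL.tendsto_div_nhds_zero.mul_const V
  refine squeeze_zero' (.of_forall fun b => mul_nonneg (Nat.cast_nonneg _) <|
    Real.iSup_nonneg fun ℓ => Real.iSup_nonneg fun _ => abs_nonneg _) ?_ hlim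
  filter_upwards [hL.def (inv_pos.2 (Nat.cast_add_one_pos q))] with b hb
  have hbound : (q + 1) * L b ≤ m b := by
    rw [Real.norm_natCast, Real.norm_natCast, inv_mul_eq_div,
      le_div_iff₀' (Nat.cast_add_one_pos q)] at hb
    exact_mod_cast hb
  have hV : 0 ≤ L b / m b * V := mul_nonneg (by positivity) (variance_nonneg _ _)
  simp only [Real.mul_iSup_of_nonneg (Nat.cast_nonneg (m b))]
  refine Real.iSup_le (fun ℓ => Real.iSup_le (fun hℓ => ?_) hV) hV
  obtain ⟨hℓ1, hℓL⟩ := Finset.mem_Icc.1 hℓ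
  have hqm : q + 1 ≤ m b := (Nat.le_mul_of_pos_right _ (hℓ1.trans hℓL)).trans hbound
  have hLm : L b ≤ m b := (Nat.le_mul_of_pos_left _ q.succ_pos).trans hbound
  refine (hLS.mul_abs_inv_mul_zetaCov_sub_le hK hL2 hIndep hLaw (by omega) hℓ1
    (hℓL.trans hLm)).trans ?_
  exact mul_le_mul_of_nonneg_right (by gcongr) (variance_nonneg _ _)

lemma MomentCond.memLp_two (hMom : MomentCond γ K) (hK : Measurable K) :
    MemLp (fun z => K (refVec z)) 2 (gpPi γ (q - 1)) := by
  have hmeas : Measurable fun z : Fin (q - 1) → ℝ => K (refVec z) := measurable_Km hK (q - 1)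
  refine ⟨hmeas.aestronglyMeasurable, ?_⟩
  rw [eLpNorm_lt_top_iff_lintegral_rpow_enorm_lt_top two_ne_zero ENNReal.ofNat_ne_top]
  simpa only [Real.enorm_eq_ofReal_abs, ENNReal.toReal_ofNat,
    ENNReal.ofReal_rpow_of_nonneg (abs_nonneg _) zero_le_two] using hMom 2 two_pos

lemma DegreeCond.ellSeq_isLittleO {m : ℕ → ℕ} (hDeg : DegreeCond m) :
    (fun n => (ellSeq m n : ℝ)) =o[atTop] fun n => (m n : ℝ) := by
  obtain ⟨ε, hε, δ, hδ, hmn, hlog⟩ := hDeg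
  have hrate : Tendsto (fun n : ℕ => (m n : ℝ) / (n : ℝ) ^ (1 - ε) +
      √(Real.log n / (m n : ℝ) ^ (1 - δ))) atTop (𝓝 0) := by
    simpa using hmn.add hlog.sqrt
  refine .of_bound fun c hc => ?_
  filter_upwards [hrate.eventually_lt_const hc, eventually_ge_atTop 1] with n hn hn1
  rcases (m n).eq_zero_or_pos with hm0 | hm0
  · simp [ellSeq, hm0]
  have hm1 : (1 : ℝ) ≤ m n := mod_cast hm0
  have hn1 : (1 : ℝ) ≤ n := mod_cast hn1
  have rpow_le {x a : ℝ} (hx : 1 ≤ x) (ha : 0 < a) : x ^ (1 - a) ≤ x :=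
    rpow_le_self_of_one_le hx (by linarith)
  rw [Real.norm_natCast, Real.norm_natCast]
  calc (ellSeq m n : ℝ)
      ≤ (m n / n + √(Real.log n / (2 * m n))) * m n := Nat.floor_le (by positivity)
    _ ≤ (m n / (n : ℝ) ^ (1 - ε) + √(Real.log n / (m n : ℝ) ^ (1 - δ))) * m n := by
      gcongr
      · exact rpow_le hn1 hε
      · exact (rpow_le hm1 hδ).trans (by linarith)
    _ ≤ c * m n := by gcongr

end UniformApproximation

/-- Lemma: uniform approximation `ζ_{m,ℓ} ≈ ℓ ζ_{m,1}`.
Under the kernel and degree conditions,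
`max_{1 ≤ ℓ ≤ ℓ_n} |ℓ⁻¹ ζ_{m,ℓ} - ζ_{m,1}| = o(1/m)` as `n → ∞`. -/
theorem zeta_uniform_approximation
    {Ω : Type*} [MeasurableSpace Ω] (P : Measure Ω) [IsProbabilityMeasure P]
    (γ : ℝ) (q : ℕ) (hq : 3 ≤ q)
    (K : (Fin q → ℝ) → ℝ) (hKmeas : Measurable K)
    (hLS : LocScaleInvariant K)
    (hNonconst : ∃ x y : Fin q → ℝ, K x ≠ K y)
    (hMom : MomentCond γ K)
    (m : ℕ → ℕ) (hDeg : DegreeCond m)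
    (Z : ℕ → Ω → ℝ) (hZmeas : ∀ i, Measurable (Z i))
    (hIndep : iIndepFun Z P)
    (hDist : ∀ i, Measure.map (Z i) P = gpMeasure γ) :
    Tendsto
      (fun n : ℕ => (m n : ℝ) *
        (⨆ ℓ ∈ Finset.Icc 1 (ellSeq m n),
          |(ℓ : ℝ)⁻¹ * zetaCov P K Z (m n) ℓ - zetaCov P K Z (m n) 1|))
      atTop (𝓝 0) := by
  exact zeta_uniform_approximation_general hLS hKmeas (hMom.memLp_two hKmeas) hIndep
    (fun i => ⟨(hZmeas i).aemeasurable, hDist i⟩) hDeg.ellSeq_isLittleO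

end
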